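/- arXiv:1208.3366 — 2 statements merged into one kernel-verified Lean document; each statement's English description precedes it below -/
import Mathlib

section
/- Let p > 3 be a prime and let a, b ∈ ℚ_p be nonzero with |a|_p = |b|_p = 1. Then the equation x³ + a·x = b has a solution x ∈ ℚ_p with |x|_p = 1 if and only if D_0·u_{p−2}² ≢ 9a_0² (mod p). -/
lemma aux_u (K : Type*) [Field K] (r1 r2 r3 : K) (u : ℕ → K) (A B : K)
  (e1 : r1 + r2 + r3 = 0) (e2 : r1*r2+r2*r3+r1*r3 = A) (e3 : r1*r2*r3 = B)
  (hu1 : u 1 = 0) (hu2 : u 2 = -A) (hu3 : u 3 = B)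
  (hr : ∀ n, 1 ≤ n → u (n+3) = B * u n - A * u (n+1)) (n : ℕ) (hn : 1 ≤ n) :
  u n * ((r1-r2)*(r2-r3)*(r3-r1)) = -(r1^(n+2)*(r2-r3)+r2^(n+2)*(r3-r1)+r3^(n+2)*(r1-r2)) := by
  have h3 : r3 = -r1-r2 := by linear_combination e1
  subst h3 e2 e3
  induction n using Nat.strong_induction_on with
  | _ n ih =>
    match n, hn with
    | 1, _ => rw [hu1]; ring
    | 2, _ => rw [hu2]; ring
    | 3, _ => rw [hu3]; ring
    | (n+4), _ =>
      have h1 := ih (n+1) (by omega) (by omega)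
      have h2 := ih (n+2) (by omega) (by omega)
      rw [show n+4 = (n+1)+3 by ring, hr _ (by omega)]
      rw [show n+1+1 = n+2 by ring]
      linear_combination (r1 * r2 * (-r1 - r2)) * h1 - (r1 * r2 + r2 * (-r1 - r2) + r1 * (-r1 - r2)) * h2

lemma aux_roots (p : ℕ) [Fact p.Prime] (K : Type*) [Field K] [Algebra (ZMod p) K] (x : K) (h : x^p = x) :
    ∃ y : ZMod p, algebraMap (ZMod p) K y = x := by
  have : CharP K p := charP_of_injective_algebraMap (algebraMap (ZMod p) K).injective p
  have h1 := (Subfield.mem_bot_iff_pow_eq_self K p).2 h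
  rw [← ZMod.fieldRange_castHom_eq_bot p] at h1
  obtain ⟨y, hy⟩ := h1
  exact ⟨y, by rw [← hy]; exact DFunLike.congr_fun (Subsingleton.elim (algebraMap (ZMod p) K) (ZMod.castHom dvd_rfl K)) y⟩

lemma aux_perm (K : Type*) [Field K] (h3 : (3:K) ≠ 0) (r1 r2 r3 t1 t2 t3 : K) (e1 : r1 + r2 + r3 = 0)
    (hsum : t1 + t2 + t3 = 0) (z1 : r1 ≠ 0) (z2 : r2 ≠ 0) (z3 : r3 ≠ 0)
    (q1 : t1 ≠ r1) (q2 : t2 ≠ r2) (q3 : t3 ≠ r3)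
    (s1 : t1 = r1 ∨ t1 = r2 ∨ t1 = r3) (s2 : t2 = r1 ∨ t2 = r2 ∨ t2 = r3)
    (s3 : t3 = r1 ∨ t3 = r2 ∨ t3 = r3)
    (i12 : t1 = t2 → r1 = r2) (i13 : t1 = t3 → r1 = r3) (i23 : t2 = t3 → r2 = r3) :
    (t1 = r2 ∧ t2 = r3 ∧ t3 = r1) ∨ (t1 = r3 ∧ t2 = r1 ∧ t3 = r2) := by
  grind

lemma aux_main (p : ℕ) [Fact p.Prime] (K : Type*) [Field K] [Algebra (ZMod p) K] [IsAlgClosed K]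
  (hp : 3 < p) (A B : ZMod p) (hA : A ≠ 0) (hB : B ≠ 0)
  (u : ℕ → ZMod p) (hu1 : u 1 = 0) (hu2 : u 2 = -A) (hu3 : u 3 = B)
  (hr : ∀ n, 1 ≤ n → u (n+3) = B * u n - A * u (n+1)) :
  (∃ x : ZMod p, x^3 + A * x = B) ↔ (-4*A^3-27*B^2) * u (p-2)^2 ≠ 9 * A^2 := by
  let φ := algebraMap (ZMod p) K
  have c3 : φ 3 = 3 := by exact_mod_cast map_natCast φ 3
  have c4 : φ 4 = 4 := by exact_mod_cast map_natCast φ 4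
  have c9 : φ 9 = 9 := by exact_mod_cast map_natCast φ 9
  have c27 : φ 27 = 27 := by exact_mod_cast map_natCast φ 27
  have φi : Function.Injective φ := φ.injective
  have : CharP K p := charP_of_injective_algebraMap φi p
  have h2 : (2:K) ≠ 0 := by
    intro h
    have := (CharP.cast_eq_zero_iff K p 2).1 (by exact_mod_cast h)
    exact absurd (Nat.le_of_dvd (by norm_num) this) (by omega)
  have h3 : (3:K) ≠ 0 := by
    intro h
    have := (CharP.cast_eq_zero_iff K p 3).1 (by exact_mod_cast h)
    exact absurd (Nat.le_of_dvd (by norm_num) this) (by omega)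
  have hp1 : 1 ≤ p - 2 := by omega
  have hp2 : p - 2 + 2 = p := by omega
  have hA' : φ A ≠ 0 := by simpa using hA
  have hB' : φ B ≠ 0 := by simpa using hB
  have hφp (y : ZMod p) : φ y ^ p = φ y := by rw [← map_pow, ZMod.pow_card]
  -- completing one root to three
  have hsplit : ∀ r1 : K, r1^3 + φ A * r1 = φ B → ∃ r2 r3 : K, r1 + r2 + r3 = 0 ∧
      r1*r2+r2*r3+r1*r3 = φ A ∧ r1*r2*r3 = φ B := by
    intro r1 h
    obtain ⟨s, hs⟩ := IsAlgClosed.exists_pow_nat_eq (-3*r1^2-4*φ A) (n := 2) (by norm_num)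
    refine ⟨(-r1+s)/2, (-r1-s)/2, by field_simp; ring, ?_, ?_⟩
    · field_simp
      linear_combination -hs
    · field_simp
      linear_combination 4 * h - r1 * hs
  have hfrob : ∀ r1 r2 r3 : K, r1 + r2 + r3 = 0 → r1*r2+r2*r3+r1*r3 = φ A → r1*r2*r3 = φ B →
      ∀ x, (x = r1 ∨ x = r2 ∨ x = r3) → (x^p = r1 ∨ x^p = r2 ∨ x^p = r3) := by
    intro r1 r2 r3 e1 e2 e3 x hx
    have hx0 : x^3 + φ A * x - φ B = 0 := by
      rw [← e2, ← e3]
      have : r3 = -r1-r2 := by linear_combination e1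
      subst this
      rcases hx with rfl | rfl | rfl <;> ring
    have hx1 : (x^p)^3 + φ A * (x^p) - φ B = 0 := by
      have := congrArg (frobenius K p) hx0
      simp only [map_sub, map_add, map_mul, map_pow, map_zero, frobenius_def, hφp] at this
      exact this
    have : (x^p - r1) * ((x^p-r2) * (x^p-r3)) = 0 := by
      rw [← hx1, ← e2, ← e3]
      linear_combination (-(x^p)^2) * e1
    rcases mul_eq_zero.1 this with h | h
    · exact Or.inl (sub_eq_zero.1 h)
    · rcases mul_eq_zero.1 h with h | h
      · exact Or.inr (Or.inl (sub_eq_zero.1 h))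
      · exact Or.inr (Or.inr (sub_eq_zero.1 h))
  have hinj : ∀ x y : K, x^p = y^p → x = y := fun x y h => frobenius_inj K p h
  have hu : ∀ r1 r2 r3 : K, r1 + r2 + r3 = 0 → r1*r2+r2*r3+r1*r3 = φ A → r1*r2*r3 = φ B →
      φ (u (p-2)) * ((r1-r2)*(r2-r3)*(r3-r1)) = -(r1^p*(r2-r3)+r2^p*(r3-r1)+r3^p*(r1-r2)) := by
    intro r1 r2 r3 e1 e2 e3
    have := aux_u K r1 r2 r3 (fun n => φ (u n)) (φ A) (φ B) e1 e2 e3 (by simp [hu1]) (by simp [hu2])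
      (by simp [hu3]) (by intro n hn; simp [hr n hn]) (p-2) hp1
    rwa [hp2] at this
  have hD : ∀ r1 r2 r3 : K, r1 + r2 + r3 = 0 → r1*r2+r2*r3+r1*r3 = φ A → r1*r2*r3 = φ B →
      ((r1-r2)*(r2-r3)*(r3-r1))^2 = -4*φ A^3-27*φ B^2 := by
    intro r1 r2 r3 e1 e2 e3
    have : r3 = -r1-r2 := by linear_combination e1
    subst this
    rw [← e2, ← e3]; ring
  have hcond : (-4*A^3-27*B^2) * u (p-2)^2 = 9 * A^2 ↔ 
     (-4*φ A^3-27*φ B^2) * φ (u (p-2))^2 = 9 * φ A^2 := by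
    rw [← φi.eq_iff]; simp [c4, c9, c27]
  constructor
  · rintro ⟨x, hx⟩ hc
    rw [hcond] at hc
    obtain ⟨r2, r3, e1, e2, e3⟩ := hsplit (φ x) (by rw [← hx]; simp)
    have g1 := hφp x
    generalize φ x = r1 at *
    have hu' := hu _ _ _ e1 e2 e3
    have hD' := hD _ _ _ e1 e2 e3
    have hup := hφp (u (p-2))
    generalize φ (u (p-2)) = w at *
    have hDp : ((r1-r2)*(r2-r3)*(r3-r1))^p = (r1^p-r2^p)*(r2^p-r3^p)*(r3^p-r1^p) := by
      rw [mul_pow, mul_pow, sub_pow_char, sub_pow_char, sub_pow_char]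
    set d := (r1-r2)*(r2-r3)*(r3-r1) with hd
    have hsq : (w*d)^2 = (3 * φ A)^2 := by rw [mul_pow, hD']; linear_combination hc
    have hne : w * d ≠ 0 := by
      intro h
      rw [h] at hsq
      have : 3 * φ A ≠ 0 := mul_ne_zero h3 hA'
      exact this (by simpa using hsq.symm)
    have hw : w ≠ 0 := left_ne_zero_of_mul hne
    have hd0 : d ≠ 0 := right_ne_zero_of_mul hne
    have hfix : (w*d)^p = w*d := by
      rcases sq_eq_sq_iff_eq_or_eq_neg.1 hsq with h | h
      · rw [h]; simpa [c3] using hφp (3 * A)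
      · rw [h]; simpa [c3] using hφp (-(3 * A))
    have hdp : d^p = d := by
      rw [mul_pow, hup] at hfix
      exact mul_left_cancel₀ hw hfix
    have hF := hfrob _ _ _ e1 e2 e3
    have n12 : r1 ≠ r2 := by rintro h; apply hd0; rw [hd, h]; ring
    have n13 : r1 ≠ r3 := by rintro h; apply hd0; rw [hd, h]; ring
    have n23 : r2 ≠ r3 := by rintro h; apply hd0; rw [hd, h]; ring
    have m2 : r2^p ≠ r1 := fun h => n12 (hinj _ _ (by rw [h, g1]))
    have m3 : r3^p ≠ r1 := fun h => n13 (hinj _ _ (by rw [h, g1]))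
    have m23 : r2^p ≠ r3^p := fun h => n23 (hinj _ _ h)
    rw [hdp, g1] at hDp
    rw [g1] at hu'
    rcases hF r2 (by simp) with h | h | h
    · exact m2 h
    · rcases hF r3 (by simp) with h' | h' | h'
      · exact m3 h'
      · exact m23 (h.trans h'.symm)
      · apply hne; rw [hu', h, h']; ring
    · rcases hF r3 (by simp) with h' | h' | h'
      · exact m3 h'
      · rw [h, h'] at hDp
        have : 2 * d = 0 := by linear_combination hDp + hd
        exact (mul_ne_zero h2 hd0) this
      · exact m23 (h.trans h'.symm)
  · intro hc
    by_contra hno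
    apply hc
    rw [hcond]
    have hex : ∃ r1 : K, r1^3 + φ A * r1 = φ B := by
      have hdeg : (Polynomial.X^3 + Polynomial.C (φ A) * Polynomial.X - Polynomial.C (φ B)).degree ≠ 0 := by
        have : (Polynomial.X^3 + Polynomial.C (φ A) * Polynomial.X - Polynomial.C (φ B)).degree = 3 := by
          compute_degree!
        rw [this]; norm_num
      obtain ⟨r, h⟩ := IsAlgClosed.exists_root _ hdeg
      refine ⟨r, ?_⟩
      simp [Polynomial.IsRoot] at h
      linear_combination h
    obtain ⟨r1, h1⟩ := hex
    obtain ⟨r2, r3, e1, e2, e3⟩ := hsplit r1 h1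
    have hnf : ∀ x : K, (x = r1 ∨ x = r2 ∨ x = r3) → x^p ≠ x := by
      intro x hx hxp
      obtain ⟨y, hy⟩ := aux_roots p K x hxp
      have hx0 : x^3 + φ A * x - φ B = 0 := by
        rw [← e2, ← e3]
        have : r3 = -r1-r2 := by linear_combination e1
        subst this
        rcases hx with rfl | rfl | rfl <;> ring
      refine hno ⟨y, φi ?_⟩
      simp only [map_add, map_mul, map_pow]
      rw [show φ y = x from hy]
      linear_combination hx0
    have hu' := hu _ _ _ e1 e2 e3
    have hD' := hD _ _ _ e1 e2 e3
    have hF := hfrob _ _ _ e1 e2 e3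
    have q1 := hnf r1 (by simp)
    have q2 := hnf r2 (by simp)
    have q3 := hnf r3 (by simp)
    have s1 := hF r1 (by simp)
    have s2 := hF r2 (by simp)
    have s3 := hF r3 (by simp)
    have hsum : r1^p + r2^p + r3^p = 0 := by
      rw [← add_pow_char, ← add_pow_char, e1, zero_pow (by omega)]
    have i12 := hinj r1 r2
    have i13 := hinj r1 r3
    have i23 := hinj r2 r3
    have z1 : r1 ≠ 0 := by rintro h; apply hB'; rw [← e3, h]; ring
    have z2 : r2 ≠ 0 := by rintro h; apply hB'; rw [← e3, h]; ring
    have z3 : r3 ≠ 0 := by rintro h; apply hB'; rw [← e3, h]; ring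
    rw [← hD', ← mul_pow, mul_comm, hu']
    have key : (r1^p = r2 ∧ r2^p = r3 ∧ r3^p = r1) ∨ (r1^p = r3 ∧ r2^p = r1 ∧ r3^p = r2) := by
      exact aux_perm K h3 _ _ _ _ _ _ e1 hsum z1 z2 z3 q1 q2 q3 s1 s2 s3 i12 i13 i23
    have : r3 = -r1-r2 := by linear_combination e1
    rcases key with ⟨k1, k2, k3⟩ | ⟨k1, k2, k3⟩ <;> rw [k1, k2, k3, ← e2, this] <;> ring

lemma aux_toZ (p : ℕ) [Fact p.Prime] (x : ℤ_[p]) : PadicInt.toZMod x = 0 ↔ ‖x‖ < 1 := by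
  rw [← RingHom.mem_ker, PadicInt.ker_toZMod, IsLocalRing.mem_maximalIdeal, PadicInt.mem_nonunits]

lemma aux_toZ1 (p : ℕ) [Fact p.Prime] (x : ℤ_[p]) : PadicInt.toZMod x ≠ 0 ↔ ‖x‖ = 1 := by
  rw [Ne, aux_toZ, not_lt]
  exact ⟨fun h => le_antisymm (PadicInt.norm_le_one x) h, fun h => h.ge⟩

lemma aux_hensel (p : ℕ) [Fact p.Prime] (hp : 3 < p) (a b : ℤ_[p]) (hb : PadicInt.toZMod b ≠ 0) :
   (∃ x : ℚ_[p], ‖x‖ = 1 ∧ x ^ 3 + a * x = b) ↔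
   ∃ x : ZMod p, x^3 + PadicInt.toZMod a * x = PadicInt.toZMod b := by
  constructor
  · rintro ⟨x, hx, h⟩
    let y : ℤ_[p] := ⟨x, hx.le⟩
    have hy : y^3 + a * y = b := by
      apply Subtype.ext
      push_cast
      exact h
    exact ⟨PadicInt.toZMod y, by rw [← hy]; simp⟩
  · rintro ⟨r, hr⟩
    have h3 : (3:ZMod p) ≠ 0 := by
      intro h
      have := (CharP.cast_eq_zero_iff (ZMod p) p 3).1 (by exact_mod_cast h)
      exact absurd (Nat.le_of_dvd (by norm_num) this) (by omega)
    have hs : ∃ s : ZMod p, s^3 + PadicInt.toZMod a * s = PadicInt.toZMod b ∧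
        3 * s^2 + PadicInt.toZMod a ≠ 0 := by
      by_cases h : 3 * r^2 + PadicInt.toZMod a = 0
      · refine ⟨-2*r, by linear_combination hr - 3 * r * h, fun h' => ?_⟩
        have : 3 * (3 * r^2) = 0 := by linear_combination h' - h
        have : r = 0 := by simpa [h3] using this
        apply hb; rw [← hr, this]; ring
      · exact ⟨r, hr, h⟩
    obtain ⟨s, hs, hs'⟩ := hs
    obtain ⟨y, rfl⟩ := ZMod.ringHom_surjective (PadicInt.toZMod (p := p)) s
    let F : Polynomial ℤ_[p] := Polynomial.X^3 + Polynomial.C a * Polynomial.X - Polynomial.C b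
    have hFe (z : ℤ_[p]) : F.aeval z = z^3 + a * z - b := by simp [F]
    have hFd : F.derivative.aeval y = 3 * y^2 + a := by simp [F]; left; norm_num
    have n1 : ‖F.derivative.aeval y‖ = 1 := by
      rw [hFd, ← aux_toZ1]; have c3 : PadicInt.toZMod (3 : ℤ_[p]) = 3 := by exact_mod_cast map_natCast (PadicInt.toZMod (p := p)) 3
      simpa [c3] using hs'
    have n2 : ‖F.aeval y‖ < 1 := by
      rw [hFe, ← aux_toZ]; simp [hs]
    obtain ⟨z, hz, -⟩ := hensels_lemma (F := F) (a := y) (by rw [n1]; simpa using n2)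
    rw [hFe, sub_eq_zero] at hz
    refine ⟨z, ?_, ?_⟩
    · rw [← PadicInt.norm_def, ← aux_toZ1]
      intro h0
      apply hb; rw [← hz]; simp [h0]
    · rw [← hz]; push_cast; rfl

/-- For a prime `p > 3` and nonzero `a b : ℚ_p` with `|a|_p = |b|_p = 1`:
the equation `x³ + a·x = b` has a solution with `|x|_p = 1` iff
`D₀·u_{p−2}² ≢ 9a₀² (mod p)`, where `a₀, b₀` are the first digits of `a, b`,
`D₀ = −4a₀³ − 27b₀²` and `(u_n)` is the integer sequence `u₁ = 0`, `u₂ = −a₀`, `u₃ = b₀`,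
`u_{n+3} = b₀·u_n − a₀·u_{n+1}`. -/
theorem stmt_8 (p : ℕ) [Fact p.Prime] (hp : 3 < p)
    (a b : ℚ_[p]) (ha : a ≠ 0) (hb : b ≠ 0)
    (hna : ‖a‖ = 1) (hnb : ‖b‖ = 1)
    (a0 b0 : ℕ) (ha0l : 1 ≤ a0) (ha0u : a0 < p) (hb0l : 1 ≤ b0) (hb0u : b0 < p)
    (hda : ‖a - (a0 : ℚ_[p])‖ < 1) (hdb : ‖b - (b0 : ℚ_[p])‖ < 1)
    (u : ℕ → ℤ) (hu1 : u 1 = 0) (hu2 : u 2 = -(a0 : ℤ)) (hu3 : u 3 = (b0 : ℤ))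
    (hurec : ∀ n, 1 ≤ n → u (n + 3) = (b0 : ℤ) * u n - (a0 : ℤ) * u (n + 1)) :
    (∃ x : ℚ_[p], ‖x‖ = 1 ∧ x ^ 3 + a * x = b) ↔
      (((-4 * (a0 : ℤ) ^ 3 - 27 * (b0 : ℤ) ^ 2) * u (p - 2) ^ 2 : ℤ) : ZMod p) ≠
        ((9 * (a0 : ℤ) ^ 2 : ℤ) : ZMod p) := by
  have key : ∀ (c : ℚ_[p]) (hc : ‖c‖ = 1) (c0 : ℕ), ‖c - (c0 : ℚ_[p])‖ < 1 →
      PadicInt.toZMod (⟨c, hc.le⟩ : ℤ_[p]) = (c0 : ZMod p) := by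
    intro c hc c0 h
    let C : ℤ_[p] := ⟨c, hc.le⟩
    have : PadicInt.toZMod (C - (c0 : ℤ_[p])) = 0 := by
      rw [aux_toZ, PadicInt.norm_def]
      push_cast
      exact h
    rw [map_sub, map_natCast] at this
    exact sub_eq_zero.1 this
  have hA : (a0 : ZMod p) ≠ 0 := by
    rw [Ne, ZMod.natCast_eq_zero_iff]
    exact Nat.not_dvd_of_pos_of_lt ha0l ha0u
  have hB : (b0 : ZMod p) ≠ 0 := by
    rw [Ne, ZMod.natCast_eq_zero_iff]
    exact Nat.not_dvd_of_pos_of_lt hb0l hb0u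
  have h1 := aux_hensel p hp ⟨a, hna.le⟩ ⟨b, hnb.le⟩ (by rw [key b hnb b0 hdb]; exact hB)
  rw [key b hnb b0 hdb, key a hna a0 hda] at h1
  have h2 := aux_main p (AlgebraicClosure (ZMod p)) hp (a0 : ZMod p) b0 hA hB (fun n => (u n : ZMod p)) (by simp [hu1])
    (by simp [hu2]) (by simp [hu3]) (by intro n hn; simp [hurec n hn])
  refine h1.trans (h2.trans ?_)
  push_cast
  rfl
end

section
/- Let p > 3 be a prime, let q ≥ 3 be a natural number and ρ ∈ ℚ_p with |ρ|_p < |q − 1|_p² < 1. If −3 is a square in ℚ_p, then the cubic equation x³ − A·x² − B·x + C = 0 has exactly three distinct solutions in ℚ_p, exactly one of which, x₁, satisfies |x₁|_p < 1, while the other two solutions x₂, x₃ satisfy |x₂|_p = |x₃|_p = 1. If −3 is not a square in ℚ_p, then this cubic equation has exactly one solution in ℚ_p. -/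
lemma aux_f2 {p : ℕ} [Fact p.Prime] : PadicInt.toZMod (2 : ℤ_[p]) = 2 := by
  rw [← one_add_one_eq_two, map_add, map_one, one_add_one_eq_two]

lemma aux_f3 {p : ℕ} [Fact p.Prime] : PadicInt.toZMod (3 : ℤ_[p]) = 3 := by
  rw [← two_add_one_eq_three, map_add, map_one, aux_f2, two_add_one_eq_three]

lemma aux_c2 {p : ℕ} [Fact p.Prime] : ((2 : ℤ_[p]) : ℚ_[p]) = 2 := by
  rw [← one_add_one_eq_two, PadicInt.coe_add, PadicInt.coe_one, one_add_one_eq_two]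

lemma aux_c3 {p : ℕ} [Fact p.Prime] : ((3 : ℤ_[p]) : ℚ_[p]) = 3 := by
  rw [← two_add_one_eq_three, PadicInt.coe_add, PadicInt.coe_one, aux_c2, two_add_one_eq_three]

lemma aux_c4 {p : ℕ} [Fact p.Prime] : ((4 : ℤ_[p]) : ℚ_[p]) = 4 := by
  rw [← three_add_one_eq_four, PadicInt.coe_add, PadicInt.coe_one, aux_c3, three_add_one_eq_four]

lemma aux_phi_zero {p : ℕ} [Fact p.Prime] (x : ℤ_[p]) :
    PadicInt.toZMod x = 0 ↔ ‖x‖ < 1 := by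
  rw [← RingHom.mem_ker, PadicInt.ker_toZMod, PadicInt.maximalIdeal_eq_span_p,
    Ideal.mem_span_singleton, PadicInt.norm_lt_one_iff_dvd]

lemma aux_phi_ne {p : ℕ} [Fact p.Prime] (x : ℤ_[p]) (h : PadicInt.toZMod x ≠ 0) : ‖x‖ = 1 := by
  rw [Ne, aux_phi_zero] at h
  exact le_antisymm (PadicInt.norm_le_one x) (not_lt.mp h)

lemma aux_nat_ne {p : ℕ} [Fact p.Prime] (hp : 3 < p) :
    (2 : ZMod p) ≠ 0 ∧ (3 : ZMod p) ≠ 0 := by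
  constructor
  · intro h
    have := (ZMod.natCast_eq_zero_iff 2 p).1 (by exact_mod_cast h)
    have := Nat.le_of_dvd (by norm_num) this
    omega
  · intro h
    have := (ZMod.natCast_eq_zero_iff 3 p).1 (by exact_mod_cast h)
    have := Nat.le_of_dvd (by norm_num) this
    omega

open Polynomial in
/-- Hensel's lemma for a simple root modulo `p`. -/
lemma aux_hensel_s18 {p : ℕ} [Fact p.Prime] (F : ℤ_[p][X]) (a : ℤ_[p])
    (h0 : PadicInt.toZMod (F.eval a) = 0) (h1 : PadicInt.toZMod (F.derivative.eval a) ≠ 0) :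
    ∃ z : ℤ_[p], F.eval z = 0 ∧ PadicInt.toZMod z = PadicInt.toZMod a := by
  have h1' := aux_phi_ne _ h1
  have h0' := (aux_phi_zero _).1 h0
  obtain ⟨z, hz, hza, -⟩ := hensels_lemma (F := F) (a := a) (by
    simpa [Polynomial.coe_aeval_eq_eval, h1'] using h0')
  refine ⟨z, by simpa using hz, ?_⟩
  rw [← sub_eq_zero, ← map_sub, aux_phi_zero]
  simpa [Polynomial.coe_aeval_eq_eval, h1'] using hza

open Polynomial in
lemma aux_sq {p : ℕ} [Fact p.Prime] (hp : 3 < p) (d : ℤ_[p])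
    (hd : PadicInt.toZMod d = -3) : ∃ y : ℤ_[p], -3 * y ^ 2 = d ∧ PadicInt.toZMod y = 1 := by
  obtain ⟨h2, h3⟩ := aux_nat_ne hp
  obtain ⟨z, hz, hz1⟩ := aux_hensel_s18 (-3 * X ^ 2 - C d) 1 (by simp [hd, aux_f3]) (by
    simp only [derivative_sub, derivative_mul, derivative_neg, derivative_C, derivative_X_pow]
    simp [h2, h3, aux_f2, aux_f3])
  refine ⟨z, ?_, by simpa using hz1⟩
  simp at hz
  linear_combination hz

open Polynomial in
lemma aux_root {p : ℕ} [Fact p.Prime] (t a b : ℤ_[p]) (ht : PadicInt.toZMod t = 0)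
    (hb : PadicInt.toZMod b = -1) :
    ∃ s : ℤ_[p], (t ^ 3 * s) ^ 3 - a * (t ^ 3 * s) ^ 2 - b * (t ^ 3 * s) + t ^ 3 = 0 := by
  obtain ⟨z, hz, -⟩ := aux_hensel_s18
    (C (t ^ 6) * X ^ 3 - C (a * t ^ 3) * X ^ 2 - C b * X + 1) (-1) (by simp [ht, hb]) (by
    simp only [derivative_sub, derivative_add, derivative_one, derivative_mul, derivative_C,
      derivative_X_pow, derivative_X]
    simp [ht, hb])
  refine ⟨z, ?_⟩
  simp at hz
  linear_combination t ^ 3 * hz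

/-- For a prime `p > 3`, a natural number `q ≥ 3` and `ρ ∈ ℚ_p` with
`|ρ|_p < |q − 1|_p² < 1`: if `−3` is a square in `ℚ_p` then the cubic
`x³ − A·x² − B·x + C = 0` has exactly three distinct solutions, exactly one of which,
`x₁`, satisfies `|x₁|_p < 1`, the other two having absolute value 1; if `−3` is not a
square in `ℚ_p`, the cubic has exactly one solution. -/
theorem stmt_18 (p : ℕ) [Fact p.Prime] (hp : 3 < p)
    (q : ℕ) (hq : 3 ≤ q) (ρ : ℚ_[p])
    (hρ : ‖ρ‖ < ‖(q : ℚ_[p]) - 1‖ ^ 2) (hq1 : ‖(q : ℚ_[p]) - 1‖ ^ 2 < 1)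
    (A B C : ℚ_[p])
    (hA : A = ρ ^ 3 - 3 * ρ - 3 * (q : ℚ_[p]) + 5)
    (hB : B = ρ * (ρ - 3) ^ 2 + 9 * (q : ℚ_[p]) + 3 * ρ * (q : ℚ_[p]) * (ρ - 2)
      - 3 * (q : ℚ_[p]) ^ 2 - 7)
    (hC : C = ((q : ℚ_[p]) - 1) ^ 3) :
    (IsSquare (-3 : ℚ_[p]) →
      ∃ x₁ x₂ x₃ : ℚ_[p], x₁ ≠ x₂ ∧ x₁ ≠ x₃ ∧ x₂ ≠ x₃ ∧
        x₁ ^ 3 - A * x₁ ^ 2 - B * x₁ + C = 0 ∧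
        x₂ ^ 3 - A * x₂ ^ 2 - B * x₂ + C = 0 ∧
        x₃ ^ 3 - A * x₃ ^ 2 - B * x₃ + C = 0 ∧
        (∀ w : ℚ_[p], w ^ 3 - A * w ^ 2 - B * w + C = 0 → w = x₁ ∨ w = x₂ ∨ w = x₃) ∧
        ‖x₁‖ < 1 ∧ ‖x₂‖ = 1 ∧ ‖x₃‖ = 1) ∧
    (¬IsSquare (-3 : ℚ_[p]) →
      ∃! x : ℚ_[p], x ^ 3 - A * x ^ 2 - B * x + C = 0) := by
  obtain ⟨h2, h3⟩ := aux_nat_ne hp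
  have ht1 : ‖(q : ℚ_[p]) - 1‖ < 1 := by
    by_contra! h
    nlinarith
  have ht0 : (q : ℚ_[p]) - 1 ≠ 0 := by
    intro h
    rw [h] at hρ
    simp at hρ
    linarith [norm_nonneg ρ]
  obtain ⟨t, ht⟩ : ∃ t : ℤ_[p], (t : ℚ_[p]) = q - 1 := ⟨⟨_, ht1.le⟩, rfl⟩
  have hr1 : ‖ρ / ((q : ℚ_[p]) - 1) ^ 2‖ < 1 := by
    rw [norm_div, norm_pow, div_lt_one (by positivity)]
    exact hρ
  obtain ⟨r, hr⟩ : ∃ r : ℤ_[p], (r : ℚ_[p]) = ρ / ((q : ℚ_[p]) - 1) ^ 2 := ⟨⟨_, hr1.le⟩, rfl⟩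
  have hφt : PadicInt.toZMod t = 0 := by
    rw [aux_phi_zero, PadicInt.norm_def, ht]; exact ht1
  have hφr : PadicInt.toZMod r = 0 := by
    rw [aux_phi_zero, PadicInt.norm_def, hr]; exact hr1
  have hqt : (q : ℚ_[p]) = 1 + t := by rw [ht]; ring
  have hρt : ρ = t ^ 2 * r := by rw [hr, ht]; field_simp
  rw [← ht] at ht0
  clear hr ht hr1 hq1 ht1 hρ
  set R : ℤ_[p] := t ^ 2 * r with hR
  set a1 : ℤ_[p] := R ^ 2 - 3 with ha1
  set b1 : ℤ_[p] := (R - 3) ^ 2 + 3 * (1 + t) * (R - 2) with hb1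
  set a : ℤ_[p] := 2 - 3 * t + R * a1 with ha
  set b : ℤ_[p] := -1 + 3 * t - 3 * t ^ 2 + R * b1 with hb
  have hφa : PadicInt.toZMod a = 2 := by simp [ha, hR, hφt, aux_f2]
  have hφb : PadicInt.toZMod b = -1 := by simp [hb, hR, hφt]
  have hAa : A = a := by
    rw [hA, hρt, hqt, ha, ha1, hR]; push_cast [aux_c2, aux_c3]; ring
  have hBb : B = b := by
    rw [hB, hρt, hqt, hb, hb1, hR]; push_cast [aux_c2, aux_c3]; ring
  have hCt : C = t ^ 3 := by rw [hC, hqt]; ring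
  obtain ⟨s, hs⟩ := aux_root t a b hφt hφb
  set x : ℤ_[p] := t ^ 3 * s with hx
  set d : ℤ_[p] := -3 + r * (2 * (2 - 3 * t) * a1 + R * a1 ^ 2 + 4 * b1)
    + t * s * (2 * a - 3 * x) with hd
  have hφx : PadicInt.toZMod x = 0 := by simp [hx, hφt]
  have hφd : PadicInt.toZMod d = -3 := by simp [hd, hφt, hφr, aux_f3]
  have hD : (x - a) ^ 2 - 4 * (x ^ 2 - a * x - b) = t ^ 2 * d := by
    rw [hd, hx, ha, hb, hR]; ring
  obtain ⟨y, hy, hφy⟩ := aux_sq hp d hφd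
  have hy0 : (y : ℚ_[p]) ≠ 0 := by
    intro h
    have : y = 0 := Subtype.ext h
    simp [this] at hφy
  have hD' : ((x : ℚ_[p]) - a) ^ 2 - 4 * (x ^ 2 - a * x - b) = -3 * (t * y) ^ 2 := by
    have : (x - a) ^ 2 - 4 * (x ^ 2 - a * x - b) = -3 * (t * y) ^ 2 := by
      rw [hD, ← hy]; ring
    have := congrArg (fun z : ℤ_[p] => (z : ℚ_[p])) this
    push_cast [aux_c3, aux_c4] at this
    exact this
  have hs' : (x : ℚ_[p]) ^ 3 - a * x ^ 2 - b * x + t ^ 3 = 0 := by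
    have := congrArg (fun z : ℤ_[p] => (z : ℚ_[p])) hs
    push_cast at this
    exact this
  have n2 : ‖(2 : ℤ_[p])‖ = 1 := aux_phi_ne _ (by rw [aux_f2]; exact h2)
  have n2' : ‖(2 : ℚ_[p])‖ = 1 := by rw [← n2, PadicInt.norm_def, aux_c2]
  have h20 : (2 : ℚ_[p]) ≠ 0 := two_ne_zero
  have h30 : (3 : ℚ_[p]) ≠ 0 := three_ne_zero
  have nx : ‖(x : ℚ_[p])‖ < 1 := by
    rw [← PadicInt.norm_def, ← aux_phi_zero]; exact hφx
  rw [hAa, hBb, hCt]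
  clear_value x a b d
  clear hd hx ha hb hb1 ha1 hR hA hB hC
  constructor
  · rintro ⟨k, hk⟩
    have nk : ‖k‖ ≤ 1 := by
      have h : ‖k‖ * ‖k‖ ≤ 1 := by
        rw [← norm_mul, ← hk]
        have := PadicInt.norm_le_one (-3 : ℤ_[p])
        rw [PadicInt.norm_def, PadicInt.coe_neg, aux_c3] at this
        exact this
      by_contra! h'
      nlinarith
    obtain ⟨k, rfl⟩ : ∃ k' : ℤ_[p], (k' : ℚ_[p]) = k := ⟨⟨k, nk⟩, rfl⟩
    have hk0 : (k : ℚ_[p]) ≠ 0 := by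
      intro h
      rw [h] at hk
      simp at hk
    have key : ∀ e : ℤ_[p], e ^ 2 = 1 →
        (((a : ℚ_[p]) - x + e * (t * y * k)) / 2) ^ 3 - a * ((a - x + e * (t * y * k)) / 2) ^ 2
          - b * ((a - x + e * (t * y * k)) / 2) + t ^ 3 = 0 ∧
        ‖((a : ℚ_[p]) - x + e * (t * y * k)) / 2‖ = 1 := by
      intro e he
      have he' : (e : ℚ_[p]) ^ 2 = 1 := by
        rw [← PadicInt.coe_pow, he, PadicInt.coe_one]
      constructor
      · have hw : (((a : ℚ_[p]) - x + e * (t * y * k)) / 2) ^ 2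
            + (x - a) * (((a : ℚ_[p]) - x + e * (t * y * k)) / 2) + (x ^ 2 - a * x - b) = 0 := by
          linear_combination (t * y * k : ℚ_[p]) ^ 2 / 4 * he' - (t * y : ℚ_[p]) ^ 2 / 4 * hk
            - hD' / 4
        linear_combination ((((a : ℚ_[p]) - x + e * (t * y * k)) / 2) - x) * hw + hs'
      · rw [norm_div, n2', div_one]
        have : ‖a - x + e * (t * y * k)‖ = 1 := aux_phi_ne _ (by simp [hφa, hφx, hφt, h2])
        rw [PadicInt.norm_def] at this
        push_cast at this
        exact this
    obtain ⟨e1, n1⟩ := key 1 (by norm_num)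
    obtain ⟨e2, nn2⟩ := key (-1) (by norm_num)
    refine ⟨x, _, _, ?_, ?_, ?_, hs', e1, e2, ?_, nx, n1, nn2⟩
    · intro h; rw [← h] at n1; linarith
    · intro h; rw [← h] at nn2; linarith
    · intro h
      have : (t * y * k : ℚ_[p]) = 0 := by
        push_cast at h
        linear_combination h
      simp [ht0, hy0, hk0] at this
    · intro w hw
      have : (w - x) * ((w - ((a : ℚ_[p]) - x + (1 : ℤ_[p]) * (t * y * k)) / 2) *
          (w - ((a : ℚ_[p]) - x + (-1 : ℤ_[p]) * (t * y * k)) / 2)) = 0 := by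
        push_cast
        linear_combination hw - hs' + (w - x) * (hD' / 4 + (t * y : ℚ_[p]) ^ 2 / 4 * hk)
      rcases mul_eq_zero.1 this with h | h
      · exact Or.inl (sub_eq_zero.1 h)
      rcases mul_eq_zero.1 h with h | h
      · exact Or.inr (Or.inl (sub_eq_zero.1 h))
      · exact Or.inr (Or.inr (sub_eq_zero.1 h))
  · intro hns
    refine ⟨x, hs', ?_⟩
    intro w hw
    by_contra hne
    have hne' : w - x ≠ 0 := sub_ne_zero.2 hne
    have hq2 : w ^ 2 + (x - a) * w + (x ^ 2 - a * x - b) = 0 := by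
      apply mul_left_cancel₀ hne'
      linear_combination hw - hs'
    apply hns
    refine ⟨(2 * w + x - a) / (t * y), ?_⟩
    field_simp
    linear_combination -hD' - 4 * hq2
end
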